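/- Let M = (M_K) be an e-BZ datum and i ∈ {1,…,n}, and set ε_i^*(M) = −(M_{[i+1,n+1]} + M_{{i}∪[i+2,n+1]} − M_{[i+2,n+1]} − M_{[i,n+1]}). Then: (1) if ε_i^*(M) > 0, there exists a unique e-BZ datum M' with M'_{[i+1,n+1]} = M_{[i+1,n+1]} + 1 and M'_K = M_K for all K ∈ M_n^× ∖ M_n^×(i)^*; (2) there exists a unique e-BZ datum M'' with M''_{[i+1,n+1]} = M_{[i+1,n+1]} − 1 and M''_K = M_K for all K ∈ M_n^× ∖ M_n^×(i)^*. -/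

import Mathlib

/-- A BZ datum of type `A_n`: a collection of integers `M = (M_K)` indexed by Maya diagrams
`K ⊆ [1,n+1]` (modeled as a total function on `Finset ℕ`, with the conventions
`M_∅ = M_{[1,n+1]} = 0`), satisfying the inequalities (BZ-1)' and the 3-term relations
(BZ-2)'. -/
def IsBZ (n : ℕ) (M : Finset ℕ → ℤ) : Prop :=
  M ∅ = 0 ∧ M (Finset.Icc 1 (n + 1)) = 0 ∧
  (∀ i j : ℕ, ∀ K : Finset ℕ, 1 ≤ i → i ≤ n + 1 → 1 ≤ j → j ≤ n + 1 → i ≠ j →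
    K ⊆ Finset.Icc 1 (n + 1) → i ∉ K → j ∉ K →
    M (insert i K) + M (insert j K) ≤ M (insert i (insert j K)) + M K) ∧
  (∀ i j k : ℕ, ∀ K : Finset ℕ, 1 ≤ i → i < j → j < k → k ≤ n + 1 →
    K ⊆ Finset.Icc 1 (n + 1) → i ∉ K → j ∉ K → k ∉ K →
    M (insert i (insert k K)) + M (insert j K) =
      min (M (insert i (insert j K)) + M (insert k K))
        (M (insert j (insert k K)) + M (insert i K)))

/-- A `w₀`-BZ datum: a BZ datum with `M_{[n−i+2,n+1]} = 0` for all `1 ≤ i ≤ n`. -/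
def IsW0BZ (n : ℕ) (M : Finset ℕ → ℤ) : Prop :=
  IsBZ n M ∧ ∀ i : ℕ, 1 ≤ i → i ≤ n → M (Finset.Icc (n - i + 2) (n + 1)) = 0

/-- An `e`-BZ datum: a BZ datum with `M_{[1,i]} = 0` for all `1 ≤ i ≤ n`. -/
def IsEBZ (n : ℕ) (M : Finset ℕ → ℤ) : Prop :=
  IsBZ n M ∧ ∀ i : ℕ, 1 ≤ i → i ≤ n → M (Finset.Icc 1 i) = 0

/-!
Write `j = i + 1`, let `U` be the set of elements above `j`, and for `K` containing neither `i` nor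
`j` let `h K = M (K ∪ {j}) - M (K ∪ {i})`. Since `M (K ∪ {i})` is prescribed, a solution is the same
as a choice of `h`. The three-term relations on `p, i, j` (for `p < i`) and on `i, j, p` (for
`j < p`) say that `h` changes by `h ↦ min h w` when `p` is inserted, respectively deleted, with
weights `w` depending only on the prescribed values. Starting from `U`, every `K` is reached by such
moves, which gives uniqueness; the weights of two commuting moves have path-independent minimum,
because of the three-term relations of `M`, which gives existence for every value of `h U`.

All remaining relations are then forced locally: the other three-term relations come from those of a
four-element cube, and the inequalities come from those of a three-element cube, starting from the
inequality for `i, j` over `U`, which is the only condition on `h U`.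
-/

open scoped symmDiff

section Cubes

variable {α : Type*} [DecidableEq α] {M : Finset α → ℤ} {K : Finset α}

/-- The inequality (BZ-1)' for the pair `x, y` over `K`. -/
def PairIneq (M : Finset α → ℤ) (x y : α) (K : Finset α) : Prop :=
  M (insert x K) + M (insert y K) ≤ M (insert x (insert y K)) + M K

/-- The tropical Plücker relation (BZ-2)' for the triple `x, y, z` over `K`; the order of the
triple matters, `y` being the middle element. -/
def ThreeTerm (M : Finset α → ℤ) (x y z : α) (K : Finset α) : Prop :=
  M (insert x (insert z K)) + M (insert y K) =
    min (M (insert x (insert y K)) + M (insert z K)) (M (insert y (insert z K)) + M (insert x K))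

theorem PairIneq.symm {x y : α} (h : PairIneq M x y K) : PairIneq M y x K := by
  simp only [PairIneq, Finset.insert_comm] at *
  omega

theorem ThreeTerm.pairIneq_outer_iff {x y z : α} (h : ThreeTerm M x y z K) :
    PairIneq M x z K ↔ PairIneq M x y K ∧ PairIneq M y z K := by
  simp only [PairIneq, ThreeTerm] at *
  omega

theorem ThreeTerm.pairIneq_outer_insert_iff {x y z : α} (h : ThreeTerm M x y z K) :
    PairIneq M x z (insert y K) ↔ PairIneq M x y (insert z K) ∧ PairIneq M y z (insert x K) := by
  simp only [PairIneq, ThreeTerm, Finset.insert_comm] at *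
  omega

variable {a b c d : α}

theorem ThreeTerm.omit_first (habc : ThreeTerm M a b c K) (hacd : ThreeTerm M a c d K)
    (habc_d : ThreeTerm M a b c (insert d K)) (habd_c : ThreeTerm M a b d (insert c K))
    (hbcd_a : ThreeTerm M b c d (insert a K)) : ThreeTerm M b c d K := by
  simp only [ThreeTerm, Finset.insert_comm] at *
  omega

theorem ThreeTerm.omit_second (habc : ThreeTerm M a b c K) (habd : ThreeTerm M a b d K)
    (hbcd : ThreeTerm M b c d K) : ThreeTerm M a c d K := by
  simp only [ThreeTerm] at *
  omega

theorem ThreeTerm.omit_third (habc : ThreeTerm M a b c K) (hacd : ThreeTerm M a c d K)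
    (hbcd : ThreeTerm M b c d K) : ThreeTerm M a b d K := by
  simp only [ThreeTerm] at *
  omega

theorem ThreeTerm.insert_first (hbcd : ThreeTerm M b c d K) (habc : ThreeTerm M a b c K)
    (habd : ThreeTerm M a b d K) (hacd_b : ThreeTerm M a c d (insert b K))
    (habc_d : ThreeTerm M a b c (insert d K)) : ThreeTerm M b c d (insert a K) := by
  simp only [ThreeTerm, Finset.insert_comm] at *
  omega

theorem ThreeTerm.insert_second (habc_d : ThreeTerm M a b c (insert d K))
    (habd_c : ThreeTerm M a b d (insert c K)) (hbcd_a : ThreeTerm M b c d (insert a K)) :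
    ThreeTerm M a c d (insert b K) := by
  simp only [ThreeTerm, Finset.insert_comm] at *
  omega

theorem ThreeTerm.insert_third (habc_d : ThreeTerm M a b c (insert d K))
    (hacd_b : ThreeTerm M a c d (insert b K)) (hbcd_a : ThreeTerm M b c d (insert a K)) :
    ThreeTerm M a b d (insert c K) := by
  simp only [ThreeTerm, Finset.insert_comm] at *
  omega

theorem ThreeTerm.insert_fourth (habc : ThreeTerm M a b c K) (hacd : ThreeTerm M a c d K)
    (hbcd : ThreeTerm M b c d K) (habd_c : ThreeTerm M a b d (insert c K))
    (hbcd_a : ThreeTerm M b c d (insert a K)) : ThreeTerm M a b c (insert d K) := by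
  simp only [ThreeTerm, Finset.insert_comm] at *
  omega

end Cubes

section MinRecursion

variable {α β : Type*} [DecidableEq α] [SemilatticeInf β]

theorem exists_inf_recursion (P : Finset α) (w : Finset α → α → β) (t : β)
    (hw : ∀ D ⊆ P, ∀ p ∈ P, ∀ q ∈ P, p ≠ q → p ∉ D → q ∉ D →
      w D p ⊓ w (insert p D) q = w D q ⊓ w (insert q D) p) :
    ∃ g : Finset α → β, g ∅ = t ∧
      ∀ D ⊆ P, ∀ p ∈ P, p ∉ D → g (insert p D) = g D ⊓ w D p := by
  induction P using Finset.induction_on with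
  | empty => exact ⟨fun _ => t, rfl, by simp⟩
  | insert m P hm ih =>
    obtain ⟨g, hg_empty, hg⟩ := ih fun D hD p hp q hq => hw D (hD.trans (Finset.subset_insert _ _))
      p (Finset.mem_insert_of_mem hp) q (Finset.mem_insert_of_mem hq)
    refine ⟨fun D => if m ∈ D then g (D.erase m) ⊓ w (D.erase m) m else g D, by simp [hg_empty],
      fun D hD p hp hpD => ?_⟩
    have erase_subset : D.erase m ⊆ P := by grind
    obtain rfl | hpm := eq_or_ne p m
    · simp [hpD]
    have hpP : p ∈ P := Finset.mem_of_mem_insert_of_ne hp hpm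
    by_cases hmD : m ∈ D
    · have hpE : p ∉ D.erase m := fun h => hpD (Finset.mem_of_mem_erase h)
      have confluence := hw (D.erase m) (erase_subset.trans (Finset.subset_insert _ _)) p hp m
        (Finset.mem_insert_self _ _) hpm hpE (by simp)
      rw [Finset.insert_erase hmD] at confluence
      simp only [Finset.mem_insert, hmD, or_true, if_true, Finset.erase_insert_of_ne hpm]
      rw [hg _ erase_subset p hpP hpE, inf_assoc, confluence, inf_assoc]
    · rw [Finset.erase_eq_of_notMem hmD] at erase_subset
      simp only [Finset.mem_insert, hmD, hpm.symm, or_self, if_false]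
      exact hg D erase_subset p hpP hpD

end MinRecursion

section Family

/-- `N` agrees with `M` except possibly at the sets which avoid `i` and contain `j`; for `j = i + 1`
the exceptional sets form `M_n^×(i)^*`. -/
def AgreeOffStar {α : Type*} (i j : α) (M N : Finset α → ℤ) : Prop :=
  ∀ K, ¬(i ∉ K ∧ j ∈ K) → N K = M K

variable {α : Type*} [LinearOrder α]

/-- The relations of a BZ datum over an arbitrary linearly ordered ground set. -/
structure IsBZFamily (M : Finset α → ℤ) : Prop where
  pairIneq {x y K} : x ≠ y → x ∉ K → y ∉ K → PairIneq M x y K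
  threeTerm {x y z K} : x < y → y < z → x ∉ K → y ∉ K → z ∉ K → ThreeTerm M x y z K

/-- `N` agrees with `M` off the sets avoiding `i` and containing `j`, and satisfies the three-term
relations which involve both `i` and `j`. These determine all the other relations. -/
structure IsStarExtension (i j : α) (M N : Finset α → ℤ) : Prop where
  agree : AgreeOffStar i j M N
  threeTerm_below {p L} : p < i → p ∉ L → i ∉ L → j ∉ L → ThreeTerm N p i j L
  threeTerm_above {p L} : j < p → p ∉ L → i ∉ L → j ∉ L → ThreeTerm N i j p L

variable {M N : Finset α → ℤ} {i j p q x y z : α} {K L : Finset α}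

theorem lt_or_lt_of_covBy (hij : i ⋖ j) (hpi : p ≠ i) (hpj : p ≠ j) : p < i ∨ j < p :=
  hpi.lt_or_gt.imp_right fun hip => (hij.ge_of_gt hip).lt_of_ne' hpj

theorem AgreeOffStar.pairIneq (h : AgreeOffStar i j M N) (hM : IsBZFamily M) (hxy : x ≠ y)
    (hx : x ∉ K) (hy : y ∉ K) (hK : i ∈ K ∨ j ∉ insert x (insert y K)) : PairIneq N x y K := by
  have := hM.pairIneq hxy hx hy
  rwa [PairIneq, h _ (by grind), h _ (by grind), h _ (by grind), h _ (by grind)]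

theorem AgreeOffStar.threeTerm (h : AgreeOffStar i j M N) (hM : IsBZFamily M) (hxy : x < y)
    (hyz : y < z) (hx : x ∉ K) (hy : y ∉ K) (hz : z ∉ K)
    (hK : i ∈ K ∨ j ∉ insert x (insert y (insert z K))) : ThreeTerm N x y z K := by
  have := hM.threeTerm hxy hyz hx hy hz
  rwa [ThreeTerm, h _ (by grind), h _ (by grind), h _ (by grind), h _ (by grind),
    h _ (by grind), h _ (by grind)]

namespace IsStarExtension

theorem threeTerm_of_mem (hN : IsStarExtension i j M N) (hM : IsBZFamily M) (hij : i ⋖ j)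
    (hxy : x < y) (hyz : y < z) (hx : x ∉ K) (hy : y ∉ K) (hz : z ∉ K)
    (hj : j = x ∨ j = y ∨ j = z) : ThreeTerm N x y z K := by
  have hjK : j ∉ K := by grind
  by_cases hiK : i ∈ K
  · exact hN.agree.threeTerm hM hxy hyz hx hy hz (.inl hiK)
  have hlt := hij.lt
  rcases hj with rfl | rfl | rfl
  · apply ThreeTerm.omit_first (a := i)
    · exact hN.threeTerm_above hxy hy hiK hx
    · apply hN.agree.threeTerm hM <;> grind
    · apply hN.threeTerm_above <;> grind
    · apply hN.threeTerm_above <;> grind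
    · apply hN.agree.threeTerm hM <;> grind
  · obtain rfl | hxi := eq_or_ne x i
    · exact hN.threeTerm_above hyz hz hx hy
    have hxi : x < i := (hij.le_of_lt hxy).lt_of_ne hxi
    apply ThreeTerm.omit_second (b := i)
    · exact hN.threeTerm_below hxi hx hiK hy
    · apply hN.agree.threeTerm hM <;> grind
    · exact hN.threeTerm_above hyz hz hiK hy
  · obtain rfl | hyi := eq_or_ne y i
    · exact hN.threeTerm_below hxy hx hy hz
    have hyi : y < i := (hij.le_of_lt hyz).lt_of_ne hyi
    apply ThreeTerm.omit_third (c := i)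
    · apply hN.agree.threeTerm hM <;> grind
    · exact hN.threeTerm_below (hxy.trans hyi) hx hiK hz
    · exact hN.threeTerm_below hyi hy hiK hz

theorem threeTerm (hN : IsStarExtension i j M N) (hM : IsBZFamily M) (hij : i ⋖ j)
    (hxy : x < y) (hyz : y < z) (hx : x ∉ K) (hy : y ∉ K) (hz : z ∉ K) : ThreeTerm N x y z K := by
  by_cases hjK : j ∈ K
  · obtain ⟨L, hjL, rfl⟩ : ∃ L, j ∉ L ∧ insert j L = K :=
      ⟨K.erase j, Finset.notMem_erase j K, Finset.insert_erase hjK⟩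
    have hxyz : ThreeTerm N x y z L := hN.agree.threeTerm hM hxy hyz (by grind) (by grind)
      (by grind) (by grind)
    rcases lt_or_gt_of_ne (show j ≠ x by grind) with hjx | hxj
    · apply ThreeTerm.insert_first hxyz <;> apply hN.threeTerm_of_mem hM hij <;> grind
    rcases lt_or_gt_of_ne (show j ≠ y by grind) with hjy | hyj
    · apply ThreeTerm.insert_second <;> apply hN.threeTerm_of_mem hM hij <;> grind
    rcases lt_or_gt_of_ne (show j ≠ z by grind) with hjz | hzj
    · apply ThreeTerm.insert_third <;> apply hN.threeTerm_of_mem hM hij <;> grind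
    · apply ThreeTerm.insert_fourth hxyz <;> apply hN.threeTerm_of_mem hM hij <;> grind
  · by_cases hj : j = x ∨ j = y ∨ j = z
    · exact hN.threeTerm_of_mem hM hij hxy hyz hx hy hz hj
    · exact hN.agree.threeTerm hM hxy hyz hx hy hz (by grind)

theorem pairIneq_base [LocallyFiniteOrderTop α] (hN : IsStarExtension i j M N) (hM : IsBZFamily M)
    (hij : i ⋖ j) (htop : PairIneq N i j (Finset.Ioi j)) (hi : i ∉ L) (hj : j ∉ L) :
    PairIneq N i j L := by
  have hlt := hij.lt
  by_cases hbelow : ∃ p ∈ L, p < i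
  · obtain ⟨p, hpL, hpi⟩ := hbelow
    obtain ⟨L, hp, rfl⟩ : ∃ L', p ∉ L' ∧ insert p L' = L :=
      ⟨L.erase p, Finset.notMem_erase p L, Finset.insert_erase hpL⟩
    have hpij : ThreeTerm N p i j L := hN.threeTerm_below hpi hp (by grind) (by grind)
    have hpj : PairIneq N p j (insert i L) :=
      hN.agree.pairIneq hM (by grind) (by grind) (by grind) (by grind)
    exact (hpij.pairIneq_outer_insert_iff.1 hpj).2
  by_cases habove : ∃ p ∉ L, j < p
  · obtain ⟨p, hp, hjp⟩ := habove
    have hijp : ThreeTerm N i j p L := hN.threeTerm_above hjp hp hi hj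
    have hip : PairIneq N i p L := hN.agree.pairIneq hM (by grind) hi hp (by grind)
    exact (hijp.pairIneq_outer_iff.1 hip).1
  have hL : L = Finset.Ioi j := by
    ext p
    rw [Finset.mem_Ioi]
    refine ⟨fun hp => ?_, fun hp => by_contra fun hpL => habove ⟨p, hpL, hp⟩⟩
    exact (lt_or_lt_of_covBy hij (ne_of_mem_of_not_mem hp hi)
      (ne_of_mem_of_not_mem hp hj)).resolve_left fun hpi => hbelow ⟨p, hp, hpi⟩
  rwa [hL]

section

variable (hN : IsStarExtension i j M N) (hM : IsBZFamily M) (hij : i ⋖ j)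
  (hbase : ∀ L, i ∉ L → j ∉ L → PairIneq N i j L)
include hN hM hij hbase

theorem pairIneq_right (hp : p ≠ j) (hjL : j ∉ L) (hpL : p ∉ L) : PairIneq N p j L := by
  by_cases hiL : i ∈ L
  · exact hN.agree.pairIneq hM hp hpL hjL (.inl hiL)
  obtain rfl | hpi := eq_or_ne p i
  · exact hbase L hpL hjL
  rcases lt_or_lt_of_covBy hij hpi hp with hlt | hlt
  · have hpij : ThreeTerm N p i j L := hN.threeTerm_below hlt hpL hiL hjL
    refine hpij.pairIneq_outer_iff.2 ⟨?_, hbase L hiL hjL⟩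
    apply hN.agree.pairIneq hM <;> grind [hij.lt]
  · have hijp : ThreeTerm N i j p L := hN.threeTerm_above hlt hpL hiL hjL
    refine (hijp.pairIneq_outer_iff.1 ?_).2.symm
    apply hN.agree.pairIneq hM <;> grind [hij.lt]

theorem pairIneq_insert (hpq : p < q) (hpj : p ≠ j) (hqj : q ≠ j) (hjL : j ∉ L) (hpL : p ∉ L)
    (hqL : q ∉ L) : PairIneq N p q (insert j L) := by
  have hpj' : PairIneq N p j (insert q L) := by
    apply hN.pairIneq_right hM hij hbase <;> grind
  have hqj' : PairIneq N q j (insert p L) := by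
    apply hN.pairIneq_right hM hij hbase <;> grind
  rcases hqj.lt_or_gt with hq | hq
  · exact ((hN.threeTerm hM hij hpq hq hpL hqL hjL).pairIneq_outer_insert_iff.1 hpj').1
  rcases hpj.lt_or_gt with hp | hp
  · exact (hN.threeTerm hM hij hp hq hpL hjL hqL).pairIneq_outer_insert_iff.2 ⟨hpj', hqj'.symm⟩
  · exact ((hN.threeTerm hM hij hp hpq hjL hpL hqL).pairIneq_outer_insert_iff.1 hqj'.symm).2

end

theorem isBZFamily [LocallyFiniteOrderTop α] (hN : IsStarExtension i j M N) (hM : IsBZFamily M)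
    (hij : i ⋖ j) (htop : PairIneq N i j (Finset.Ioi j)) : IsBZFamily N where
  threeTerm := hN.threeTerm hM hij
  pairIneq {x y K} hxy hx hy := by
    have hbase (L : Finset α) (hi : i ∉ L) (hj : j ∉ L) : PairIneq N i j L :=
      hN.pairIneq_base hM hij htop hi hj
    by_cases hjK : j ∈ K
    · obtain ⟨L, hjL, rfl⟩ : ∃ L, j ∉ L ∧ insert j L = K :=
        ⟨K.erase j, Finset.notMem_erase j K, Finset.insert_erase hjK⟩
      rcases hxy.lt_or_gt with hlt | hlt
      · apply hN.pairIneq_insert hM hij hbase hlt <;> grind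
      · apply PairIneq.symm
        apply hN.pairIneq_insert hM hij hbase hlt <;> grind
    obtain rfl | hyj := eq_or_ne y j
    · exact hN.pairIneq_right hM hij hbase hxy hy hx
    obtain rfl | hxj := eq_or_ne x j
    · exact (hN.pairIneq_right hM hij hbase hyj hx hy).symm
    exact hN.agree.pairIneq hM hxy hx hy (by grind)

end IsStarExtension

end Family

section SymmDiff

variable {α : Type*} [DecidableEq α] {p : α} {D U : Finset α}

theorem insert_symmDiff_of_notMem (hU : p ∉ U) : insert p D ∆ U = insert p (D ∆ U) := by
  ext
  grind [Finset.mem_symmDiff]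

theorem insert_symmDiff_of_mem (hU : p ∈ U) : insert p D ∆ U = (D ∆ U).erase p := by
  ext
  grind [Finset.mem_symmDiff]

end SymmDiff

section Weights

variable {α : Type*} [DecidableEq α] {M N : Finset α → ℤ} {i j p q : α} {K : Finset α}

/-- The increment of `M` on passing from `K ∪ {i}` to `K ∪ {j}`. -/
def gap (M : Finset α → ℤ) (i j : α) (K : Finset α) : ℤ :=
  M (insert j K) - M (insert i K)

/-- The bound which the three-term relation on `i, j, p` over `K` imposes on `gap M i j`. -/
def edgeWeight (M : Finset α → ℤ) (i j : α) (K : Finset α) (p : α) : ℤ :=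
  M (insert i (insert j K)) + M (insert p K) - M (insert i K) - M (insert i (insert p K))

theorem threeTerm_below_iff_gap : ThreeTerm M p i j K ↔
    gap M i j (insert p K) = min (gap M i j K) (edgeWeight M i j K p) := by
  simp only [ThreeTerm, gap, edgeWeight, Finset.insert_comm]
  omega

theorem threeTerm_above_iff_gap : ThreeTerm M i j p K ↔
    gap M i j K = min (gap M i j (insert p K)) (edgeWeight M i j K p) := by
  simp only [ThreeTerm, gap, edgeWeight]
  omega

theorem edgeWeight_min_below (hi : ThreeTerm M p q i K) (hj : ThreeTerm M p q j (insert i K)) :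
    min (edgeWeight M i j K p) (edgeWeight M i j (insert p K) q) =
      min (edgeWeight M i j K q) (edgeWeight M i j (insert q K) p) := by
  simp only [ThreeTerm, edgeWeight, Finset.insert_comm] at *
  omega

theorem edgeWeight_min_between (hi : ThreeTerm M p i q K)
    (hj : ThreeTerm M p j q (insert i K)) :
    min (edgeWeight M i j (insert q K) p) (edgeWeight M i j (insert p K) q) =
      min (edgeWeight M i j K q) (edgeWeight M i j K p) := by
  simp only [ThreeTerm, edgeWeight, Finset.insert_comm] at *
  omega

theorem edgeWeight_min_above (hi : ThreeTerm M i p q K) (hj : ThreeTerm M j p q (insert i K)) :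
    min (edgeWeight M i j (insert q K) p) (edgeWeight M i j K q) =
      min (edgeWeight M i j (insert p K) q) (edgeWeight M i j K p) := by
  simp only [ThreeTerm, edgeWeight, Finset.insert_comm] at *
  omega

theorem AgreeOffStar.edgeWeight_eq (h : AgreeOffStar i j M N) (hpj : p ≠ j) (hj : j ∉ K) :
    edgeWeight N i j K p = edgeWeight M i j K p := by
  simp only [edgeWeight]
  rw [h _ (by grind), h _ (by grind), h _ (by grind), h _ (by grind)]

/-- The function equal to `M` off the sets avoiding `i` and containing `j`, and with values there
such that its gap is `h`. -/
def starFill (M : Finset α → ℤ) (i j : α) (h : Finset α → ℤ) (K : Finset α) : ℤ :=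
  if i ∉ K ∧ j ∈ K then M (insert i (K.erase j)) + h (K.erase j) else M K

theorem agreeOffStar_starFill (h : Finset α → ℤ) : AgreeOffStar i j M (starFill M i j h) :=
  fun _ hK => if_neg hK

theorem gap_starFill {h : Finset α → ℤ} {K : Finset α} (hij : i ≠ j) (hi : i ∉ K) (hj : j ∉ K) :
    gap (starFill M i j h) i j K = h K := by
  simp [gap, starFill, hi, hj, hij]

end Weights

section GapFunction

variable {α : Type*} [LinearOrder α] {M N : Finset α → ℤ} {i j p q : α} {K : Finset α}

/-- The recursion satisfied by `gap N i j` when `N` satisfies the three-term relations on the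
triples `p < i < j` and `i < j < p` and agrees with `M` wherever the weights are evaluated. -/
structure IsGapFunction (M : Finset α → ℤ) (i j : α) (h : Finset α → ℤ) : Prop where
  below {p : α} {K : Finset α} : p < i → p ∉ K → i ∉ K → j ∉ K →
    h (insert p K) = min (h K) (edgeWeight M i j K p)
  above {p : α} {K : Finset α} : j < p → p ∉ K → i ∉ K → j ∉ K →
    h K = min (h (insert p K)) (edgeWeight M i j K p)

theorem AgreeOffStar.isStarExtension_iff (h : AgreeOffStar i j M N) (hlt : i < j) :
    IsStarExtension i j M N ↔ IsGapFunction M i j (gap N i j) := by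
  refine ⟨fun hN => ⟨fun {p K} hp hpK hi hj => ?_, fun {p K} hp hpK hi hj => ?_⟩,
    fun hN => ⟨h, fun {p K} hp hpK hi hj => ?_, fun {p K} hp hpK hi hj => ?_⟩⟩
  · rw [← h.edgeWeight_eq (hp.trans hlt).ne hj, ← threeTerm_below_iff_gap]
    exact hN.threeTerm_below hp hpK hi hj
  · rw [← h.edgeWeight_eq hp.ne' hj, ← threeTerm_above_iff_gap]
    exact hN.threeTerm_above hp hpK hi hj
  · rw [threeTerm_below_iff_gap, h.edgeWeight_eq (hp.trans hlt).ne hj]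
    exact hN.below hp hpK hi hj
  · rw [threeTerm_above_iff_gap, h.edgeWeight_eq hp.ne' hj]
    exact hN.above hp hpK hi hj

theorem IsBZFamily.isGapFunction (hN : IsBZFamily N) (hMN : AgreeOffStar i j M N)
    (hij : i < j) : IsGapFunction M i j (gap N i j) :=
  (hMN.isStarExtension_iff hij).1
    { agree := hMN
      threeTerm_below := fun hp hpL hi hj => hN.threeTerm hp hij hpL hi hj
      threeTerm_above := fun hp hpL hi hj => hN.threeTerm hij hp hi hj hpL }

theorem IsGapFunction.congr {g h : Finset α → ℤ} (hh : IsGapFunction M i j h) (hij : i < j)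
    (hgh : ∀ K, i ∉ K → j ∉ K → g K = h K) : IsGapFunction M i j g where
  below {p K} hp hpK hi hj := by
    rw [hgh K hi hj, hgh _ (by grind) (by grind), hh.below hp hpK hi hj]
  above {p K} hp hpK hi hj := by
    rw [hgh K hi hj, hgh _ (by grind) (by grind), hh.above hp hpK hi hj]

variable [LocallyFiniteOrderTop α]

/-- The weight of the move which toggles `p` in the set `D ∆ Ioi j`. Sets are encoded by their
symmetric difference `D` with `Ioi j`, so that every move inserts an element into `D`. -/
def toggleWeight (M : Finset α → ℤ) (i j : α) (D : Finset α) (p : α) : ℤ :=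
  edgeWeight M i j ((D ∆ Finset.Ioi j).erase p) p

theorem isGapFunction_iff_toggle {h : Finset α → ℤ} (hij : i ⋖ j) : IsGapFunction M i j h ↔
    ∀ D p, i ∉ D → j ∉ D → p ≠ i → p ≠ j → p ∉ D →
      h (insert p D ∆ Finset.Ioi j) = min (h (D ∆ Finset.Ioi j)) (toggleWeight M i j D p) := by
  have hlt := hij.lt
  have hi : i ∉ Finset.Ioi j := by grind
  have hj : j ∉ Finset.Ioi j := by grind
  constructor
  · intro hh D p hiD hjD hpi hpj hpD
    rcases lt_or_lt_of_covBy hij hpi hpj with hp | hp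
    · have hpU : p ∉ D ∆ Finset.Ioi j := by grind [Finset.mem_symmDiff]
      rw [toggleWeight, Finset.erase_eq_of_notMem hpU, ← hh.below hp hpU
        (by grind [Finset.mem_symmDiff]) (by grind [Finset.mem_symmDiff]),
        insert_symmDiff_of_notMem (by grind)]
    · have hpU : p ∈ D ∆ Finset.Ioi j := by grind [Finset.mem_symmDiff]
      rw [insert_symmDiff_of_mem (by grind), hh.above hp (Finset.notMem_erase _ _)
        (by grind [Finset.mem_symmDiff]) (by grind [Finset.mem_symmDiff]),
        Finset.insert_erase hpU, toggleWeight]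
  · intro hh
    refine ⟨fun {p K} hp hpK hiK hjK => ?_, fun {p K} hp hpK hiK hjK => ?_⟩
    · have := hh (K ∆ Finset.Ioi j) p (by grind [Finset.mem_symmDiff])
        (by grind [Finset.mem_symmDiff]) (by grind) (by grind) (by grind [Finset.mem_symmDiff])
      rwa [insert_symmDiff_of_notMem (by grind), toggleWeight,
        symmDiff_symmDiff_cancel_right, Finset.erase_eq_of_notMem hpK] at this
    · have := hh (insert p K ∆ Finset.Ioi j) p (by grind [Finset.mem_symmDiff])
        (by grind [Finset.mem_symmDiff]) (by grind) (by grind) (by grind [Finset.mem_symmDiff])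
      rwa [insert_symmDiff_of_mem (by grind), toggleWeight,
        symmDiff_symmDiff_cancel_right, Finset.erase_insert hpK] at this

theorem IsBZFamily.toggleWeight_confluent (hM : IsBZFamily M) (hij : i ⋖ j) {D : Finset α}
    (hi : i ∉ D) (hj : j ∉ D) (hpi : p ≠ i) (hpj : p ≠ j) (hqi : q ≠ i) (hqj : q ≠ j)
    (hpq : p ≠ q) (hpD : p ∉ D) (hqD : q ∉ D) :
    min (toggleWeight M i j D p) (toggleWeight M i j (insert p D) q) =
      min (toggleWeight M i j D q) (toggleWeight M i j (insert q D) p) := by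
  have hlt := hij.lt
  wlog h : p < q generalizing p q
  · exact (this hqi hqj hpi hpj hpq.symm hqD hpD (hpq.lt_or_gt.resolve_left h)).symm
  obtain ⟨K, hK⟩ : ∃ K, K = (D ∆ Finset.Ioi j) \ {p, q} := ⟨_, rfl⟩
  have hiK : i ∉ K := by grind [Finset.mem_symmDiff]
  have hjK : j ∉ insert i K := by grind [Finset.mem_symmDiff]
  have hpK : p ∉ insert i K := by grind
  have hqK : q ∉ insert i K := by grind
  simp only [toggleWeight]
  rcases lt_or_lt_of_covBy hij hqi hqj with hq | hq
  · have hi := hM.threeTerm h hq (by grind) (by grind) hiK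
    have hj := hM.threeTerm h (hq.trans hlt) hpK hqK hjK
    convert edgeWeight_min_below hi hj using 3 <;> ext <;> grind [Finset.mem_symmDiff]
  rcases lt_or_lt_of_covBy hij hpi hpj with hp | hp
  · have hi := hM.threeTerm hp (hlt.trans hq) (by grind) hiK (by grind)
    have hj := hM.threeTerm (hp.trans hlt) hq hpK hjK hqK
    convert edgeWeight_min_between hi hj using 3 <;> ext <;> grind [Finset.mem_symmDiff]
  · have hi := hM.threeTerm (hlt.trans hp) h hiK (by grind) (by grind)
    have hj := hM.threeTerm hp h hjK hpK hqK
    convert edgeWeight_min_above hi hj using 3 <;> ext <;> grind [Finset.mem_symmDiff]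

theorem IsBZFamily.exists_isGapFunction [Finite α] (hM : IsBZFamily M) (hij : i ⋖ j) (t : ℤ) :
    ∃ h, IsGapFunction M i j h ∧ h (Finset.Ioi j) = t := by
  have := Fintype.ofFinite α
  obtain ⟨g, hg_empty, hg⟩ := exists_inf_recursion ({i, j}ᶜ : Finset α) (toggleWeight M i j) t
    fun D hD p hp q hq hpq hpD hqD => by
      apply hM.toggleWeight_confluent hij <;> grind [Finset.mem_compl]
  refine ⟨fun K => g (K ∆ Finset.Ioi j), (isGapFunction_iff_toggle hij).2 ?_, by simp [hg_empty]⟩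
  intro D p hi hj hpi hpj hpD
  simp only [symmDiff_symmDiff_cancel_right]
  exact hg D (by grind [Finset.mem_compl]) p (by simp [hpi, hpj]) hpD

theorem IsGapFunction.ext {g h : Finset α → ℤ} (hg : IsGapFunction M i j g)
    (hh : IsGapFunction M i j h) (hij : i ⋖ j) (htop : g (Finset.Ioi j) = h (Finset.Ioi j))
    (hi : i ∉ K) (hj : j ∉ K) : g K = h K := by
  rw [isGapFunction_iff_toggle hij] at hg hh
  have hlt := hij.lt
  suffices ∀ D, i ∉ D → j ∉ D → g (D ∆ Finset.Ioi j) = h (D ∆ Finset.Ioi j) by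
    have := this (K ∆ Finset.Ioi j) (by grind [Finset.mem_symmDiff])
      (by grind [Finset.mem_symmDiff])
    rwa [symmDiff_symmDiff_cancel_right] at this
  intro D
  induction D using Finset.induction_on with
  | empty => exact fun _ _ => by rwa [← Finset.bot_eq_empty, bot_symmDiff]
  | insert p D hpD ih =>
    intro hi hj
    rw [hg D p (by grind) (by grind) (by grind) (by grind) hpD,
      hh D p (by grind) (by grind) (by grind) (by grind) hpD, ih (by grind) (by grind)]

theorem IsBZFamily.exists_agreeOffStar [Finite α] (hM : IsBZFamily M) (hij : i ⋖ j) {b : ℤ}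
    (hb : b + M (insert i (Finset.Ioi j)) ≤ M (insert i (Finset.Ici j)) + M (Finset.Ioi j)) :
    ∃ N, IsBZFamily N ∧ AgreeOffStar i j M N ∧ N (Finset.Ici j) = b := by
  have hlt := hij.lt
  obtain ⟨h, hh, htop⟩ := hM.exists_isGapFunction hij (b - M (insert i (Finset.Ioi j)))
  have agree : AgreeOffStar i j M (starFill M i j h) := agreeOffStar_starFill h
  have value : starFill M i j h (Finset.Ici j) = b := by
    simp [starFill, hlt, htop]
  have hN : IsStarExtension i j M (starFill M i j h) :=
    (agree.isStarExtension_iff hlt).2 <| hh.congr hlt fun _ hi hj => gap_starFill hlt.ne hi hj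
  refine ⟨_, hN.isBZFamily hM hij ?_, agree, value⟩
  rw [PairIneq, Finset.Ioi_insert, value, agree _ (by grind), agree _ (by grind),
    agree _ (by grind)]
  linarith

theorem IsBZFamily.eq_of_agreeOffStar {N₁ N₂ : Finset α → ℤ} (h₁ : IsBZFamily N₁)
    (h₂ : IsBZFamily N₂) (hij : i ⋖ j) (h₁₂ : AgreeOffStar i j N₁ N₂)
    (htop : N₂ (Finset.Ici j) = N₁ (Finset.Ici j)) : N₂ = N₁ := by
  funext K
  by_cases hK : i ∉ K ∧ j ∈ K
  swap
  · exact h₁₂ K hK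
  have hi (L : Finset α) : N₂ (insert i L) = N₁ (insert i L) := h₁₂ _ (by simp)
  have agree_self : AgreeOffStar i j N₁ N₁ := fun _ _ => rfl
  have gap_eq : gap N₂ i j (K.erase j) = gap N₁ i j (K.erase j) :=
    (h₂.isGapFunction h₁₂ hij.lt).ext (h₁.isGapFunction agree_self hij.lt) hij
      (by rw [gap, gap, Finset.Ioi_insert, htop, hi]) (by grind) (Finset.notMem_erase j K)
  simpa [gap, hi, Finset.insert_erase hK.2] using gap_eq

end GapFunction

section Transport

variable {α : Type*} {S : Finset α} {M M' : Finset α → ℤ}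

/-- The restriction of a function of finite sets to the subsets of `S`. -/
def restrictTo (S : Finset α) (M : Finset α → ℤ) (K : Finset S) : ℤ :=
  M (K.map (.subtype _))

theorem coe_mem_map_subtype_iff {x : S} {K : Finset S} : x.1 ∈ K.map (.subtype _) ↔ x ∈ K := by
  simp

theorem exists_map_subtype_eq {K : Finset α} (hK : K ⊆ S) :
    ∃ L : Finset S, L.map (.subtype _) = K := by
  classical
  exact ⟨K.subtype (· ∈ S), Finset.subtype_map_of_mem fun _ hx => hK hx⟩

theorem agreeOffStar_restrictTo_iff {i j : S} :
    AgreeOffStar i j (restrictTo S M) (restrictTo S M') ↔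
      ∀ K ⊆ S, ¬(i.1 ∉ K ∧ j.1 ∈ K) → M' K = M K := by
  constructor
  · intro h K hK hij
    obtain ⟨L, rfl⟩ := exists_map_subtype_eq hK
    exact h L (by simpa using hij)
  · intro h K hij
    exact h _ (Finset.map_subtype_subset K) (by simpa using hij)

variable [DecidableEq α]

/-- The extension of a function of the subsets of `S` to all finite sets by `K ↦ K ∩ S`. -/
def extendInter (S : Finset α) (N : Finset S → ℤ) (K : Finset α) : ℤ :=
  N (K.subtype (· ∈ S))

theorem restrictTo_extendInter (N : Finset S → ℤ) : restrictTo S (extendInter S N) = N := by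
  funext K
  rw [restrictTo, extendInter]
  congr 1
  ext
  simp

theorem pairIneq_restrictTo_iff {x y : S} {K : Finset S} :
    PairIneq (restrictTo S M) x y K ↔ PairIneq M x y (K.map (.subtype _)) := by
  simp [PairIneq, restrictTo]

theorem threeTerm_restrictTo_iff {x y z : S} {K : Finset S} :
    ThreeTerm (restrictTo S M) x y z K ↔ ThreeTerm M x y z (K.map (.subtype _)) := by
  simp [ThreeTerm, restrictTo]

end Transport

section TransportLinearOrder

variable {α : Type*} [LinearOrder α] {S : Finset α} {M : Finset α → ℤ}

theorem isBZFamily_restrictTo_iff : IsBZFamily (restrictTo S M) ↔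
    (∀ x ∈ S, ∀ y ∈ S, ∀ K ⊆ S, x ≠ y → x ∉ K → y ∉ K → PairIneq M x y K) ∧
      ∀ x ∈ S, ∀ y ∈ S, ∀ z ∈ S, ∀ K ⊆ S, x < y → y < z → x ∉ K → y ∉ K → z ∉ K →
        ThreeTerm M x y z K := by
  constructor
  · intro h
    constructor
    · intro x hx y hy K hK hxy hxK hyK
      obtain ⟨L, rfl⟩ := exists_map_subtype_eq hK
      lift x to S using hx
      lift y to S using hy
      rw [coe_mem_map_subtype_iff] at hxK hyK
      exact pairIneq_restrictTo_iff.1 (h.pairIneq (by simpa using hxy) hxK hyK)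
    · intro x hx y hy z hz K hK hxy hyz hxK hyK hzK
      obtain ⟨L, rfl⟩ := exists_map_subtype_eq hK
      lift x to S using hx
      lift y to S using hy
      lift z to S using hz
      rw [coe_mem_map_subtype_iff] at hxK hyK hzK
      exact threeTerm_restrictTo_iff.1 (h.threeTerm hxy hyz hxK hyK hzK)
  · rintro ⟨hpair, hthree⟩
    refine ⟨fun {x y K} hxy hxK hyK => pairIneq_restrictTo_iff.2 ?_,
      fun {x y z K} hxy hyz hxK hyK hzK => threeTerm_restrictTo_iff.2 ?_⟩
    · rw [← coe_mem_map_subtype_iff] at hxK hyK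
      exact hpair x x.2 y y.2 _ (Finset.map_subtype_subset K) (Subtype.coe_ne_coe.2 hxy) hxK hyK
    · rw [← coe_mem_map_subtype_iff] at hxK hyK hzK
      exact hthree x x.2 y y.2 z z.2 _ (Finset.map_subtype_subset K) hxy hyz hxK hyK hzK

instance instLocallyFiniteOrderTopFinsetCoe (S : Finset α) : LocallyFiniteOrderTop S :=
  .ofIci' S (fun a => {x | a ≤ x}) (by simp)

end TransportLinearOrder

section Interval

variable {n m : ℕ} {M : Finset ℕ → ℤ}

theorem isBZ_iff : IsBZ n M ↔ M ∅ = 0 ∧ M (Finset.Icc 1 (n + 1)) = 0 ∧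
    IsBZFamily (restrictTo (Finset.Icc 1 (n + 1)) M) := by
  rw [isBZFamily_restrictTo_iff]
  simp only [IsBZ, PairIneq, ThreeTerm, Finset.mem_Icc]
  grind

theorem covBy_of_val_add_one_eq {i j : Finset.Icc 1 m} (h : i.1 + 1 = j) : i ⋖ j :=
  ⟨Subtype.coe_lt_coe.1 (by omega), fun k hik hkj => by
    rw [← Subtype.coe_lt_coe] at hik hkj
    omega⟩

theorem map_subtype_Ici (j : Finset.Icc 1 m) :
    (Finset.Ici j).map (.subtype _) = Finset.Icc (j : ℕ) m := by
  ext x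
  have := Finset.mem_Icc.1 j.2
  simp only [Finset.mem_map, Finset.mem_Ici, ← Subtype.coe_le_coe, Subtype.exists, Finset.mem_Icc,
    Function.Embedding.subtype_apply, exists_and_left, exists_prop, exists_eq_right_right]
  omega

theorem map_subtype_Ioi (j : Finset.Icc 1 m) :
    (Finset.Ioi j).map (.subtype _) = Finset.Icc (j + 1 : ℕ) m := by
  ext x
  have := Finset.mem_Icc.1 j.2
  simp only [Finset.mem_map, Finset.mem_Ioi, ← Subtype.coe_lt_coe, Subtype.exists, Finset.mem_Icc,
    Function.Embedding.subtype_apply, exists_and_left, exists_prop, exists_eq_right_right]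
  omega

theorem IsBZ.extendInter_of_agreeOffStar {N : Finset (Finset.Icc 1 (n + 1)) → ℤ}
    {i j : Finset.Icc 1 (n + 1)} (hM : IsBZ n M) (hN : IsBZFamily N)
    (h : AgreeOffStar i j (restrictTo _ M) N) : IsBZ n (extendInter _ N) := by
  rw [← restrictTo_extendInter N, agreeOffStar_restrictTo_iff] at h
  refine isBZ_iff.2 ⟨?_, ?_, by rwa [restrictTo_extendInter]⟩
  · rw [h ∅ (Finset.empty_subset _) (by simp), hM.1]
  · rw [h _ subset_rfl fun hij => hij.1 i.2, hM.2.1]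

theorem IsBZ.exists_agree {i : ℕ} (hM : IsBZ n M) (hi : 1 ≤ i) (hin : i ≤ n) {b : ℤ}
    (hb : b + M (insert i (Finset.Icc (i + 2) (n + 1))) ≤
      M (Finset.Icc i (n + 1)) + M (Finset.Icc (i + 2) (n + 1))) :
    ∃ M', IsBZ n M' ∧ M' (Finset.Icc (i + 1) (n + 1)) = b ∧
      ∀ K ⊆ Finset.Icc 1 (n + 1), ¬(i ∉ K ∧ i + 1 ∈ K) → M' K = M K := by
  lift i to Finset.Icc 1 (n + 1) using (by grind) with x hx
  obtain ⟨y, hy⟩ : ∃ y : Finset.Icc 1 (n + 1), (y : ℕ) = x + 1 := ⟨⟨x + 1, by grind⟩, rfl⟩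
  obtain ⟨N, hN, agree, value⟩ := (isBZ_iff.1 hM).2.2.exists_agreeOffStar
    (covBy_of_val_add_one_eq hy.symm) (b := b) (by
      simp only [restrictTo, Finset.map_insert, map_subtype_Ici, map_subtype_Ioi, hy,
        Function.Embedding.subtype_apply]
      rwa [Finset.insert_Icc_add_one_left_eq_Icc (by omega)])
  refine ⟨extendInter _ N, hM.extendInter_of_agreeOffStar hN agree, ?_, ?_⟩
  · rw [← value, ← hy, ← map_subtype_Ici]
    exact congrFun (restrictTo_extendInter N) (Finset.Ici y)
  · rw [← hy, ← agreeOffStar_restrictTo_iff, restrictTo_extendInter]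
    exact agree

theorem IsBZ.eq_of_agree {i : ℕ} (hi : 1 ≤ i) (hin : i ≤ n) {M₁ M₂ : Finset ℕ → ℤ}
    (h₁ : IsBZ n M₁) (h₂ : IsBZ n M₂)
    (htop : M₁ (Finset.Icc (i + 1) (n + 1)) = M₂ (Finset.Icc (i + 1) (n + 1)))
    (agree : ∀ K ⊆ Finset.Icc 1 (n + 1), ¬(i ∉ K ∧ i + 1 ∈ K) → M₁ K = M₂ K)
    {K : Finset ℕ} (hK : K ⊆ Finset.Icc 1 (n + 1)) : M₁ K = M₂ K := by
  lift i to Finset.Icc 1 (n + 1) using (by grind) with x hx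
  obtain ⟨y, hy⟩ : ∃ y : Finset.Icc 1 (n + 1), (y : ℕ) = x + 1 := ⟨⟨x + 1, by grind⟩, rfl⟩
  rw [← hy, ← map_subtype_Ici] at htop
  rw [← hy, ← agreeOffStar_restrictTo_iff] at agree
  obtain ⟨L, rfl⟩ := exists_map_subtype_eq hK
  exact congrFun ((isBZ_iff.1 h₂).2.2.eq_of_agreeOffStar (isBZ_iff.1 h₁).2.2
    (covBy_of_val_add_one_eq hy.symm) agree htop) L

theorem IsBZ.pairIneq_Icc {i : ℕ} (hM : IsBZ n M) (hi : 1 ≤ i) (hin : i ≤ n) :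
    M (Finset.Icc (i + 1) (n + 1)) + M (insert i (Finset.Icc (i + 2) (n + 1))) ≤
      M (Finset.Icc i (n + 1)) + M (Finset.Icc (i + 2) (n + 1)) := by
  have insert_succ : insert (i + 1) (Finset.Icc (i + 2) (n + 1)) = Finset.Icc (i + 1) (n + 1) :=
    Finset.insert_Icc_add_one_left_eq_Icc (by omega)
  have insert_self : insert i (Finset.Icc (i + 1) (n + 1)) = Finset.Icc i (n + 1) :=
    Finset.insert_Icc_add_one_left_eq_Icc (by omega)
  have pairIneq := hM.2.2.1 (i + 1) i (Finset.Icc (i + 2) (n + 1)) (by omega) (by omega) hi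
    (by omega) (by omega) (Finset.Icc_subset_Icc_left (by omega)) (by simp) (by simp)
  rwa [Finset.insert_comm, insert_succ, insert_self] at pairIneq

theorem IsEBZ.of_agree {M' : Finset ℕ → ℤ} {i : ℕ} (hM : IsEBZ n M) (hi : 1 ≤ i)
    (hM' : IsBZ n M')
    (agree : ∀ K ⊆ Finset.Icc 1 (n + 1), ¬(i ∉ K ∧ i + 1 ∈ K) → M' K = M K) : IsEBZ n M' := by
  refine ⟨hM', fun m hm hmn => ?_⟩
  rw [agree _ (Finset.Icc_subset_Icc_right (by omega)) (by grind), hM.2 m hm hmn]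

theorem stmt8_general (n : ℕ) (M : Finset ℕ → ℤ) (hM : IsBZ n M) (i : ℕ) (hi1 : 1 ≤ i)
    (hi2 : i ≤ n) (b : ℤ) (hb : b + M (insert i (Finset.Icc (i + 2) (n + 1))) ≤
      M (Finset.Icc i (n + 1)) + M (Finset.Icc (i + 2) (n + 1))) :
    (∃ M' : Finset ℕ → ℤ, IsBZ n M' ∧ M' (Finset.Icc (i + 1) (n + 1)) = b ∧
      ∀ K : Finset ℕ, K ⊆ Finset.Icc 1 (n + 1) → ¬(i ∉ K ∧ i + 1 ∈ K) → M' K = M K) ∧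
    ∀ M₁ M₂ : Finset ℕ → ℤ,
      (IsBZ n M₁ ∧ M₁ (Finset.Icc (i + 1) (n + 1)) = b ∧
        ∀ K : Finset ℕ, K ⊆ Finset.Icc 1 (n + 1) → ¬(i ∉ K ∧ i + 1 ∈ K) → M₁ K = M K) →
      (IsBZ n M₂ ∧ M₂ (Finset.Icc (i + 1) (n + 1)) = b ∧
        ∀ K : Finset ℕ, K ⊆ Finset.Icc 1 (n + 1) → ¬(i ∉ K ∧ i + 1 ∈ K) → M₂ K = M K) →
      ∀ K : Finset ℕ, K ⊆ Finset.Icc 1 (n + 1) → M₁ K = M₂ K := by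
  refine ⟨hM.exists_agree hi1 hi2 hb, ?_⟩
  rintro M₁ M₂ ⟨h₁, value₁, agree₁⟩ ⟨h₂, value₂, agree₂⟩ K hK
  exact h₁.eq_of_agree hi1 hi2 h₂ (value₁.trans value₂.symm)
    (fun L hL hiL => (agree₁ L hL hiL).trans (agree₂ L hL hiL).symm) hK

end Interval

/-- let `M` be an `e`-BZ datum, `i ∈ [1,n]`, and set
`ε_i^*(M) = −(M_{[i+1,n+1]} + M_{{i}∪[i+2,n+1]} − M_{[i+2,n+1]} − M_{[i,n+1]})`.
(1) If `ε_i^*(M) > 0` there is a unique `e`-BZ datum `M'` (unique as a collection) with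
`M'_{[i+1,n+1]} = M_{[i+1,n+1]} + 1` and `M'_K = M_K` for all
`K ∉ M_n^×(i)^* = {K : i ∉ K, i+1 ∈ K}`.  (2) There is a unique `e`-BZ datum `M''` with
`M''_{[i+1,n+1]} = M_{[i+1,n+1]} − 1` and `M''_K = M_K` for all `K ∉ M_n^×(i)^*`. -/
theorem stmt8 (n : ℕ) (hn : 1 ≤ n) (M : Finset ℕ → ℤ) (hM : IsEBZ n M)
    (i : ℕ) (hi1 : 1 ≤ i) (hi2 : i ≤ n) :
    (0 < -(M (Finset.Icc (i + 1) (n + 1)) + M (insert i (Finset.Icc (i + 2) (n + 1))) -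
        M (Finset.Icc (i + 2) (n + 1)) - M (Finset.Icc i (n + 1))) →
      ((∃ M' : Finset ℕ → ℤ, IsEBZ n M' ∧
          M' (Finset.Icc (i + 1) (n + 1)) = M (Finset.Icc (i + 1) (n + 1)) + 1 ∧
          ∀ K : Finset ℕ, K ⊆ Finset.Icc 1 (n + 1) → ¬(i ∉ K ∧ i + 1 ∈ K) → M' K = M K) ∧
        ∀ M₁ M₂ : Finset ℕ → ℤ,
          (IsEBZ n M₁ ∧ M₁ (Finset.Icc (i + 1) (n + 1)) = M (Finset.Icc (i + 1) (n + 1)) + 1 ∧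
            ∀ K : Finset ℕ, K ⊆ Finset.Icc 1 (n + 1) → ¬(i ∉ K ∧ i + 1 ∈ K) → M₁ K = M K) →
          (IsEBZ n M₂ ∧ M₂ (Finset.Icc (i + 1) (n + 1)) = M (Finset.Icc (i + 1) (n + 1)) + 1 ∧
            ∀ K : Finset ℕ, K ⊆ Finset.Icc 1 (n + 1) → ¬(i ∉ K ∧ i + 1 ∈ K) → M₂ K = M K) →
          ∀ K : Finset ℕ, K ⊆ Finset.Icc 1 (n + 1) → M₁ K = M₂ K)) ∧
    ((∃ M'' : Finset ℕ → ℤ, IsEBZ n M'' ∧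
        M'' (Finset.Icc (i + 1) (n + 1)) = M (Finset.Icc (i + 1) (n + 1)) - 1 ∧
        ∀ K : Finset ℕ, K ⊆ Finset.Icc 1 (n + 1) → ¬(i ∉ K ∧ i + 1 ∈ K) → M'' K = M K) ∧
      ∀ M₁ M₂ : Finset ℕ → ℤ,
        (IsEBZ n M₁ ∧ M₁ (Finset.Icc (i + 1) (n + 1)) = M (Finset.Icc (i + 1) (n + 1)) - 1 ∧
          ∀ K : Finset ℕ, K ⊆ Finset.Icc 1 (n + 1) → ¬(i ∉ K ∧ i + 1 ∈ K) → M₁ K = M K) →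
        (IsEBZ n M₂ ∧ M₂ (Finset.Icc (i + 1) (n + 1)) = M (Finset.Icc (i + 1) (n + 1)) - 1 ∧
          ∀ K : Finset ℕ, K ⊆ Finset.Icc 1 (n + 1) → ¬(i ∉ K ∧ i + 1 ∈ K) → M₂ K = M K) →
        ∀ K : Finset ℕ, K ⊆ Finset.Icc 1 (n + 1) → M₁ K = M₂ K) := by
  constructor
  · intro hε
    obtain ⟨⟨M', hM', value, agree⟩, unique⟩ := stmt8_general n M hM.1 i hi1 hi2
      (M (Finset.Icc (i + 1) (n + 1)) + 1) (by linarith)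
    exact ⟨⟨M', hM.of_agree hi1 hM' agree, value, agree⟩,
      fun M₁ M₂ h₁ h₂ => unique M₁ M₂ ⟨h₁.1.1, h₁.2⟩ ⟨h₂.1.1, h₂.2⟩⟩
  · obtain ⟨⟨M', hM', value, agree⟩, unique⟩ := stmt8_general n M hM.1 i hi1 hi2
      (M (Finset.Icc (i + 1) (n + 1)) - 1) (by linarith [hM.1.pairIneq_Icc hi1 hi2])
    exact ⟨⟨M', hM.of_agree hi1 hM' agree, value, agree⟩,
      fun M₁ M₂ h₁ h₂ => unique M₁ M₂ ⟨h₁.1.1, h₁.2⟩ ⟨h₂.1.1, h₂.2⟩⟩
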